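/- Let G be a bounded domain in ℂⁿ (n ≥ 2) and let K be a compact subset of G such that through every point z ∈ ℂⁿ ∖ K there passes a complex affine line disjoint from K. Then G ∖ K is a domain, and the Kobayashi distance k_{G∖K} is quasi-isometrically equivalent to the restriction of k_G to (G∖K) × (G∖K): there exist constants c₁ ≥ 1 and c₂ ≥ 0 such that k_G(z,w) ≤ k_{G∖K}(z,w) ≤ c₁·k_G(z,w) + c₂ for all z, w ∈ G∖K. In particular, if (G, k_G) is Gromov hyperbolic, then so is (G∖K, k_{G∖K}). -/

import Mathlib

open Metric Set

noncomputable section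

/-- Inverse hyperbolic tangent: `artanh t = (1/2) * log ((1+t)/(1-t))`. -/
def artanh (x : ℝ) : ℝ := Real.log ((1 + x) / (1 - x)) / 2

variable {E : Type*} [NormedAddCommGroup E] [NormedSpace ℂ E]

/-- The Lempert function of a set `D ⊆ E`:
`l_D(z,w) = inf { artanh |α| : ∃ φ : 𝔻 → D holomorphic, φ 0 = z, φ α = w }`. -/
def lempert (D : Set E) (z w : E) : ℝ :=
  sInf { r : ℝ | ∃ α : ℂ, ‖α‖ < 1 ∧
    (∃ φ : ℂ → E, DifferentiableOn ℂ φ (ball 0 1) ∧ MapsTo φ (ball 0 1) D ∧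
      φ 0 = z ∧ φ α = w) ∧ r = artanh ‖α‖ }

/-- The Kobayashi pseudodistance: infimum of `∑ l_D(z_{i-1}, z_i)` over all finite
chains of points `z = c 0, c 1, …, c m = w` in `D`. -/
def kobayashi (D : Set E) (z w : E) : ℝ :=
  sInf { r : ℝ | ∃ (m : ℕ) (c : ℕ → E), c 0 = z ∧ c m = w ∧ (∀ i ≤ m, c i ∈ D) ∧
    r = ∑ i ∈ Finset.range m, lempert D (c i) (c (i + 1)) }

/-- The Carathéodory pseudodistance:
`c_D(z,w) = sup { artanh |f w| : f : D → 𝔻 holomorphic, f z = 0 }`. -/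
def caratheodory (D : Set E) (z w : E) : ℝ :=
  sSup { r : ℝ | ∃ f : E → ℂ, DifferentiableOn ℂ f D ∧ MapsTo f D (ball 0 1) ∧
    f z = 0 ∧ r = artanh ‖f w‖ }

/-- `(D, d)` is Gromov hyperbolic if
`sup_{p,q,x,w ∈ D} ( min{(p,x)_w, (x,q)_w} − (p,q)_w ) < ∞`, where
`(x,y)_z = d x z + d z y - d x y` is the Gromov product. -/
def GromovHyperbolicWith (D : Set E) (d : E → E → ℝ) : Prop :=
  ∃ C : ℝ, ∀ p ∈ D, ∀ q ∈ D, ∀ x ∈ D, ∀ w ∈ D,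
    min (d p w + d w x - d p x) (d x w + d w q - d x q) - (d p w + d w q - d p q) ≤ C

end

/-!
Both distances are measured along chains of short analytic discs. Fix `o ∈ G \ K`. A short disc in
`G` that starts at `a`, off a neighbourhood of `K`, meets `K` only near the unit circle, so it can
be shrunk to a disc in `G \ K` at an extra cost of order `l * exp (-2 * k_G(a, o))`, `l` being its
length. In a chain of total length at most `k_G(z, w) + 1`, the point reached after length `s` is at
distance at least `|s - k_G(z, o)| - 1` from `o`, so the extra costs are dominated by the increments
of `tanh (s - k_G(z, o))` and their sum is bounded. The part of the chain near `K` is replaced by a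
single detour of bounded length: from every point near `K`, a thin disc around a segment of the line
missing `K` leads to a fixed compact subset of `G \ K`. Hence `k_{G∖K} ≤ k_G + C`.

The lines also connect `Kᶜ` to a large sphere, so `G` and `Kᶜ` are connected open sets covering a
simply connected space, and then `G \ K = G ∩ Kᶜ` is connected.
-/

/-! ### Hyperbolic tangent estimates -/

lemma artanh_eq_real_artanh {x : ℝ} (hx : x ∈ Icc (-1) 1) : artanh x = Real.artanh x := by
  rw [artanh, Real.artanh_eq_half_log hx]
  ring

lemma artanh_tanh (l : ℝ) : artanh (Real.tanh l) = l := by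
  rw [artanh_eq_real_artanh ⟨(Real.neg_one_lt_tanh l).le, (Real.tanh_lt_one l).le⟩,
    Real.artanh_tanh]

lemma tanh_artanh {x : ℝ} (hx : x ∈ Ioo (-1) 1) : Real.tanh (artanh x) = x := by
  rw [artanh_eq_real_artanh (Ioo_subset_Icc_self hx), Real.tanh_artanh hx]

lemma artanh_nonneg {x : ℝ} (hx : x ∈ Ico 0 1) : 0 ≤ artanh x := by
  rw [artanh_eq_real_artanh ⟨by linarith [hx.1], hx.2.le⟩]
  exact Real.artanh_nonneg hx.1

lemma artanh_le_add_two_mul_sub {x y : ℝ} (hx : 0 ≤ x) (hxy : x ≤ y) (hy : y ≤ 1 / 2) :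
    artanh y ≤ artanh x + 2 * (y - x) := by
  have log_add : Real.log (1 + y) - Real.log (1 + x) ≤ y - x := by
    rw [← Real.log_div (by linarith) (by linarith)]
    refine (Real.log_le_sub_one_of_pos (by apply div_pos <;> linarith)).trans ?_
    rw [div_sub_one (by linarith), div_le_iff₀ (by linarith)]
    nlinarith
  have log_sub : Real.log (1 - x) - Real.log (1 - y) ≤ 2 * (y - x) := by
    rw [← Real.log_div (by linarith) (by linarith)]
    refine (Real.log_le_sub_one_of_pos (by apply div_pos <;> linarith)).trans ?_
    rw [div_sub_one (by linarith), div_le_iff₀ (by linarith)]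
    nlinarith
  rw [artanh, artanh, Real.log_div (by linarith) (by linarith),
    Real.log_div (by linarith) (by linarith)]
  linarith

lemma tanh_nonneg {l : ℝ} (hl : 0 ≤ l) : 0 ≤ Real.tanh l := by
  rw [Real.tanh_eq_sinh_div_cosh]
  exact div_nonneg (Real.sinh_nonneg_iff.2 hl) (Real.cosh_pos l).le

lemma tanh_sub_add_tanh (u v : ℝ) :
    Real.tanh (v - u) + Real.tanh u = Real.tanh v * (1 + Real.tanh u * Real.tanh (v - u)) := by
  obtain ⟨d, rfl⟩ : ∃ d, v = d + u := ⟨v - u, by ring⟩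
  have := (Real.cosh_pos d).ne'
  have := (Real.cosh_pos u).ne'
  have := (Real.cosh_pos (d + u)).ne'
  rw [add_sub_cancel_right]
  simp only [Real.tanh_eq_sinh_div_cosh]
  field_simp
  rw [Real.sinh_add, Real.cosh_add]

lemma one_sub_tanh (l : ℝ) : 1 - Real.tanh l = (1 + Real.tanh l) * Real.exp (-2 * l) := by
  have hcosh := (Real.cosh_pos l).ne'
  have hexp : Real.exp (-2 * l) = Real.exp (-l) * Real.exp (-l) := by
    rw [← Real.exp_add]; ring_nf
  have hinv : Real.exp l * Real.exp (-l) = 1 := by rw [← Real.exp_add]; simp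
  rw [Real.tanh_eq_sinh_div_cosh, one_sub_div hcosh, one_add_div hcosh, Real.cosh_sub_sinh,
    Real.cosh_add_sinh, hexp, div_mul_eq_mul_div]
  congr 1
  linear_combination -Real.exp (-l) * hinv

lemma one_sub_tanh_le (l : ℝ) : 1 - Real.tanh l ≤ 2 * Real.exp (-2 * l) := by
  rw [one_sub_tanh]
  gcongr
  linarith [Real.tanh_lt_one l]

lemma tanh_le_two_mul {l : ℝ} (hl : 0 ≤ l) : Real.tanh l ≤ 2 * l := by
  have hexp : Real.exp (-2 * l) ≤ 1 - Real.tanh l := by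
    rw [one_sub_tanh]
    exact le_mul_of_one_le_left (Real.exp_pos _).le (by linarith [tanh_nonneg hl])
  linarith [Real.add_one_le_exp (-2 * l)]

lemma cosh_le_exp_abs (x : ℝ) : Real.cosh x ≤ Real.exp |x| := by
  rw [← Real.cosh_abs, ← Real.cosh_add_sinh]
  exact le_add_of_nonneg_right (Real.sinh_nonneg_iff.2 (abs_nonneg x))

lemma mul_exp_le_tanh_add_sub_tanh {l : ℝ} (hl : 0 ≤ l) (x : ℝ) :
    l * Real.exp (-(|x + l| + |x|)) ≤ Real.tanh (x + l) - Real.tanh x := by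
  have hx := Real.cosh_pos x
  have hxl := Real.cosh_pos (x + l)
  have hsub : Real.tanh (x + l) - Real.tanh x =
      Real.sinh l / (Real.cosh (x + l) * Real.cosh x) := by
    have hsinh : Real.sinh l = Real.sinh (x + l - x) := by ring_nf
    rw [hsinh, Real.sinh_sub, Real.tanh_eq_sinh_div_cosh, Real.tanh_eq_sinh_div_cosh,
      div_sub_div _ _ hxl.ne' hx.ne']
  rw [hsub, Real.exp_neg, ← div_eq_mul_inv, Real.exp_add]
  gcongr
  exacts [Real.self_le_sinh_iff.2 hl, cosh_le_exp_abs _, cosh_le_exp_abs _]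

lemma mul_exp_le_exp_mul_tanh_add_sub_tanh {g x l : ℝ} (hl : l ∈ Icc 0 1) (hx : |x| ≤ g + 1) :
    l * Real.exp (-2 * g) ≤ Real.exp 3 * (Real.tanh (x + l) - Real.tanh x) := by
  have habs : |x + l| ≤ |x| + 1 :=
    (abs_add_le x l).trans (by rw [abs_of_nonneg hl.1]; linarith [hl.2])
  calc l * Real.exp (-2 * g)
      ≤ l * (Real.exp 3 * Real.exp (-(|x + l| + |x|))) := by
        rw [← Real.exp_add]
        gcongr
        exacts [hl.1, by linarith]
    _ = Real.exp 3 * (l * Real.exp (-(|x + l| + |x|))) := by ring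
    _ ≤ Real.exp 3 * (Real.tanh (x + l) - Real.tanh x) := by
        gcongr
        exact mul_exp_le_tanh_add_sub_tanh hl.1 x

section AnalyticDiscs

variable {E : Type*} [NormedAddCommGroup E] [NormedSpace ℂ E] {D D' K : Set E} {a b z w : E}
  {l : ℝ}

/-- Some analytic disc `φ : 𝔻 → D` has `φ 0 = a` and `φ (tanh l) = b`. Rotating the disc puts the
second point on the positive axis, so these `l` are exactly the values competing in `lempert`. -/
def DiscLink (D : Set E) (a b : E) (l : ℝ) : Prop :=
  0 ≤ l ∧ ∃ φ : ℂ → E, DifferentiableOn ℂ φ (ball 0 1) ∧ MapsTo φ (ball 0 1) D ∧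
    φ 0 = a ∧ φ (Real.tanh l : ℝ) = b

lemma tanh_mem_ball (l : ℝ) : ((Real.tanh l : ℝ) : ℂ) ∈ ball (0 : ℂ) 1 := by
  rw [mem_ball_zero_iff, Complex.norm_real]
  exact Real.abs_tanh_lt_one l

lemma norm_ofReal_tanh (hl : 0 ≤ l) : ‖((Real.tanh l : ℝ) : ℂ)‖ = Real.tanh l := by
  rw [Complex.norm_real, Real.norm_of_nonneg (tanh_nonneg hl)]

lemma norm_ofReal_mul_lt {q : ℝ} (hq : 0 < q) {ζ : ℂ} (hζ : ζ ∈ ball (0 : ℂ) 1) :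
    ‖(q : ℂ) * ζ‖ < q := by
  rw [norm_mul, Complex.norm_real, Real.norm_of_nonneg hq.le]
  exact mul_lt_of_lt_one_right hq (mem_ball_zero_iff.1 hζ)

lemma norm_add_lt_norm_one_add_mul {t : ℝ} (ht : |t| < 1) {ζ : ℂ} (hζ : ζ ∈ ball (0 : ℂ) 1) :
    ‖ζ + t‖ < ‖1 + t * ζ‖ := by
  have hsq : ‖1 + t * ζ‖ ^ 2 - ‖ζ + t‖ ^ 2 = (1 - t ^ 2) * (1 - ‖ζ‖ ^ 2) := by
    simp only [Complex.sq_norm, Complex.normSq_apply, Complex.add_re, Complex.add_im,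
      Complex.one_re, Complex.one_im, Complex.re_ofReal_mul, Complex.im_ofReal_mul,
      Complex.ofReal_re, Complex.ofReal_im]
    ring
  have ht2 : t ^ 2 < 1 := (sq_lt_one_iff_abs_lt_one t).2 ht
  have hζ2 : ‖ζ‖ ^ 2 < 1 :=
    (sq_lt_one_iff₀ (norm_nonneg ζ)).2 (mem_ball_zero_iff.1 hζ)
  refine lt_of_pow_lt_pow_left₀ 2 (norm_nonneg _) ?_
  linarith [mul_pos (sub_pos.2 ht2) (sub_pos.2 hζ2)]

lemma discLink_of_disc {φ : ℂ → E} (hφ : DifferentiableOn ℂ φ (ball 0 1))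
    (hφD : MapsTo φ (ball 0 1) D) {α : ℂ} (hα : α ∈ ball (0 : ℂ) 1) :
    DiscLink D (φ 0) (φ α) (artanh ‖α‖) := by
  rw [mem_ball_zero_iff] at hα
  obtain ⟨u, hu, hαu⟩ : ∃ u : ℂ, ‖u‖ = 1 ∧ (‖α‖ : ℂ) * u = α :=
    ⟨Complex.exp (α.arg * Complex.I), Complex.norm_exp_ofReal_mul_I _,
      Complex.norm_mul_exp_arg_mul_I α⟩
  have hrot : MapsTo (fun ζ : ℂ => ζ * u) (ball 0 1) (ball 0 1) := fun ζ hζ => by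
    simpa [hu] using hζ
  refine ⟨artanh_nonneg ⟨norm_nonneg _, hα⟩, fun ζ => φ (ζ * u), hφ.comp (by fun_prop) hrot,
    hφD.comp hrot, by simp only [zero_mul], ?_⟩
  simp only [tanh_artanh ⟨by linarith [norm_nonneg α], hα⟩, hαu]

lemma discLink_tanh_tanh {φ : ℂ → E} (hφ : DifferentiableOn ℂ φ (ball 0 1))
    (hφD : MapsTo φ (ball 0 1) D) {u v : ℝ} (huv : u ≤ v) :
    DiscLink D (φ (Real.tanh u : ℝ)) (φ (Real.tanh v : ℝ)) (v - u) := by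
  have hlt : ∀ ζ ∈ ball (0 : ℂ) 1, ‖ζ + (Real.tanh u : ℝ)‖ < ‖1 + (Real.tanh u : ℝ) * ζ‖ :=
    fun ζ => norm_add_lt_norm_one_add_mul (Real.abs_tanh_lt_one u)
  have hne : ∀ ζ ∈ ball (0 : ℂ) 1, 1 + ((Real.tanh u : ℝ) : ℂ) * ζ ≠ 0 := fun ζ hζ =>
    norm_pos_iff.1 ((norm_nonneg _).trans_lt (hlt ζ hζ))
  have hmoebius : MapsTo (fun ζ : ℂ => (ζ + (Real.tanh u : ℝ)) / (1 + (Real.tanh u : ℝ) * ζ))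
      (ball 0 1) (ball 0 1) := fun ζ hζ => by
    rw [mem_ball_zero_iff, norm_div, div_lt_one (norm_pos_iff.2 (hne ζ hζ))]
    exact hlt ζ hζ
  refine ⟨sub_nonneg.2 huv,
    fun ζ => φ ((ζ + (Real.tanh u : ℝ)) / (1 + (Real.tanh u : ℝ) * ζ)),
    hφ.comp (.div (by fun_prop) (by fun_prop) hne) hmoebius, hφD.comp hmoebius,
    by simp only [zero_add, mul_zero, add_zero, div_one], ?_⟩
  change φ _ = φ _
  congr 1
  rw [div_eq_iff (hne _ (tanh_mem_ball _))]
  exact_mod_cast tanh_sub_add_tanh u v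

lemma dist_disc_le {ρ : ℝ} (hρ : ∀ x ∈ D, ‖x‖ ≤ ρ) {φ : ℂ → E}
    (hφ : DifferentiableOn ℂ φ (ball 0 1)) (hφD : MapsTo φ (ball 0 1) D) {ζ : ℂ}
    (hζ : ζ ∈ ball (0 : ℂ) 1) : dist (φ ζ) (φ 0) ≤ 2 * ρ * ‖ζ‖ := by
  have hmaps : MapsTo φ (ball 0 1) (closedBall (φ 0) (2 * ρ)) := fun x hx => by
    rw [mem_closedBall, dist_eq_norm]
    linarith [norm_sub_le (φ x) (φ 0), hρ _ (hφD hx), hρ _ (hφD (mem_ball_self one_pos))]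
  simpa using Complex.dist_le_div_mul_dist_of_mapsTo_ball hφ hmaps hζ

namespace DiscLink

lemma left_mem (h : DiscLink D a b l) : a ∈ D := by
  obtain ⟨-, φ, -, hφD, rfl, -⟩ := h
  exact hφD (mem_ball_self one_pos)

lemma right_mem (h : DiscLink D a b l) : b ∈ D := by
  obtain ⟨-, φ, -, hφD, -, rfl⟩ := h
  exact hφD (tanh_mem_ball l)

lemma symm (h : DiscLink D a b l) : DiscLink D b a l := by
  obtain ⟨hl, φ, hφ, hφD, rfl, rfl⟩ := h
  have hneg : MapsTo (fun ζ : ℂ => -ζ) (ball 0 1) (ball 0 1) := fun ζ hζ => by simpa using hζ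
  simpa [-Complex.ofReal_tanh] using
    discLink_tanh_tanh (φ := fun ζ => φ (-ζ)) (hφ.comp (by fun_prop) hneg) (hφD.comp hneg)
      (neg_nonpos.2 hl)

lemma exists_split (h : DiscLink D a b l) {u : ℝ} (hu : u ∈ Icc 0 l) :
    ∃ c, DiscLink D a c u ∧ DiscLink D c b (l - u) := by
  obtain ⟨-, φ, hφ, hφD, rfl, rfl⟩ := h
  exact ⟨φ (Real.tanh u : ℝ), by simpa using discLink_tanh_tanh hφ hφD hu.1,
    discLink_tanh_tanh hφ hφD hu.2⟩

lemma map {F : Type*} [NormedAddCommGroup F] [NormedSpace ℂ F] {D' : Set F}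
    (h : DiscLink D a b l) {f : E → F} (hf : DifferentiableOn ℂ f D) (hfD : MapsTo f D D') :
    DiscLink D' (f a) (f b) l := by
  obtain ⟨hl, φ, hφ, hφD, rfl, rfl⟩ := h
  exact ⟨hl, f ∘ φ, hf.comp hφ hφD, hfD.comp hφD, rfl, rfl⟩

lemma mono (h : DiscLink D a b l) (hDD' : D ⊆ D') : DiscLink D' a b l :=
  h.map differentiableOn_id hDD'

lemma dist_le {ρ : ℝ} (hρ : ∀ x ∈ D, ‖x‖ ≤ ρ) (h : DiscLink D a b l) : dist b a ≤ 4 * ρ * l := by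
  have hρ0 : 0 ≤ ρ := (norm_nonneg a).trans (hρ a h.left_mem)
  obtain ⟨hl, φ, hφ, hφD, rfl, rfl⟩ := h
  calc dist (φ (Real.tanh l : ℝ)) (φ 0)
      ≤ 2 * ρ * ‖((Real.tanh l : ℝ) : ℂ)‖ := dist_disc_le hρ hφ hφD (tanh_mem_ball l)
    _ ≤ 2 * ρ * (2 * l) := by
        rw [norm_ofReal_tanh hl]
        gcongr
        exact tanh_le_two_mul hl
    _ = 4 * ρ * l := by ring

end DiscLink

lemma discLink_sdiff_of_forall_le_norm {φ : ℂ → E} (hφ : DifferentiableOn ℂ φ (ball 0 1))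
    (hφD : MapsTo φ (ball 0 1) D) {q : ℝ} (hq : q ∈ Ioc 0 1)
    (hφK : ∀ ζ ∈ ball (0 : ℂ) 1, φ ζ ∈ K → q ≤ ‖ζ‖) {x : ℝ} (hx : x ∈ Ico 0 q) :
    DiscLink (D \ K) (φ 0) (φ x) (artanh (x / q)) := by
  have hball : MapsTo (fun ζ : ℂ => q * ζ) (ball 0 1) (ball 0 1) := fun ζ hζ =>
    mem_ball_zero_iff.2 ((norm_ofReal_mul_lt hq.1 hζ).trans_le hq.2)
  have hnorm : ‖((x / q : ℝ) : ℂ)‖ = x / q := by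
    rw [Complex.norm_real, Real.norm_of_nonneg (div_nonneg hx.1 hq.1.le)]
  have hmul : (q : ℂ) * (x / q : ℝ) = x := by
    rw [← Complex.ofReal_mul, mul_div_cancel₀ _ hq.1.ne']
  have hlink := discLink_of_disc (φ := fun ζ => φ (q * ζ)) (D := D \ K)
    (hφ.comp (by fun_prop) hball) (fun ζ hζ => ⟨hφD (hball hζ), fun hK =>
      (hφK _ (hball hζ) hK).not_gt (norm_ofReal_mul_lt hq.1 hζ)⟩)
    (α := ((x / q : ℝ) : ℂ)) (by rw [mem_ball_zero_iff, hnorm, div_lt_one hq.1]; exact hx.2)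
  simpa only [hnorm, hmul, mul_zero] using hlink

/-! ### The Lempert function and the Kobayashi pseudodistance -/

lemma lempert_eq_sInf_discLink (D : Set E) (z w : E) :
    lempert D z w = sInf {l | DiscLink D z w l} := by
  rw [lempert]
  congr 1
  ext l
  constructor
  · rintro ⟨α, hα, ⟨φ, hφ, hφD, rfl, rfl⟩, rfl⟩
    exact discLink_of_disc hφ hφD (mem_ball_zero_iff.2 hα)
  · rintro ⟨hl, φ, hφ, hφD, hz, hw⟩
    exact ⟨(Real.tanh l : ℝ), mem_ball_zero_iff.1 (tanh_mem_ball l), ⟨φ, hφ, hφD, hz, hw⟩,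
      by rw [norm_ofReal_tanh hl, artanh_tanh]⟩

lemma lempert_nonneg (D : Set E) (z w : E) : 0 ≤ lempert D z w := by
  rw [lempert_eq_sInf_discLink]
  exact Real.sInf_nonneg fun _ h => h.1

lemma lempert_comm (D : Set E) (z w : E) : lempert D z w = lempert D w z := by
  simp only [lempert_eq_sInf_discLink]
  exact congrArg sInf (Set.ext fun _ => ⟨DiscLink.symm, DiscLink.symm⟩)

lemma DiscLink.lempert_le (h : DiscLink D z w l) : lempert D z w ≤ l := by
  rw [lempert_eq_sInf_discLink]
  exact csInf_le ⟨0, fun _ h => h.1⟩ h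

lemma DiscLink.exists_lt_lempert_add (h : DiscLink D z w l) {ε : ℝ} (hε : 0 < ε) :
    ∃ l', DiscLink D z w l' ∧ l' < lempert D z w + ε := by
  rw [lempert_eq_sInf_discLink]
  exact exists_lt_of_csInf_lt ⟨l, h⟩ (lt_add_of_pos_right _ hε)

lemma kobayashi_le_sum {m : ℕ} {c : ℕ → E} (hc : ∀ i ≤ m, c i ∈ D) :
    kobayashi D (c 0) (c m) ≤ ∑ i ∈ Finset.range m, lempert D (c i) (c (i + 1)) := by
  refine csInf_le ⟨0, ?_⟩ ⟨m, c, rfl, rfl, hc, rfl⟩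
  rintro _ ⟨m, c, -, -, -, rfl⟩
  exact Finset.sum_nonneg fun i _ => lempert_nonneg D _ _

lemma kobayashi_nonneg (D : Set E) (z w : E) : 0 ≤ kobayashi D z w := by
  refine Real.sInf_nonneg ?_
  rintro _ ⟨m, c, -, -, -, rfl⟩
  exact Finset.sum_nonneg fun i _ => lempert_nonneg D _ _

lemma exists_chain_sum_lempert_lt (hz : z ∈ D) (hw : w ∈ D) {ε : ℝ} (hε : 0 < ε) :
    ∃ (m : ℕ) (c : ℕ → E), c 0 = z ∧ c m = w ∧ (∀ i ≤ m, c i ∈ D) ∧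
      ∑ i ∈ Finset.range m, lempert D (c i) (c (i + 1)) < kobayashi D z w + ε := by
  have hne : {r : ℝ | ∃ (m : ℕ) (c : ℕ → E), c 0 = z ∧ c m = w ∧ (∀ i ≤ m, c i ∈ D) ∧
      r = ∑ i ∈ Finset.range m, lempert D (c i) (c (i + 1))}.Nonempty := by
    refine ⟨_, 1, fun i => if i = 0 then z else w, rfl, rfl, fun i _ => ?_, rfl⟩
    dsimp only
    split_ifs
    exacts [hz, hw]
  obtain ⟨_, ⟨m, c, h0, hm, hc, rfl⟩, hlt⟩ :=
    exists_lt_of_csInf_lt hne (lt_add_of_pos_right (kobayashi D z w) hε)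
  exact ⟨m, c, h0, hm, hc, hlt⟩

lemma kobayashi_self (hz : z ∈ D) : kobayashi D z z = 0 := by
  refine (kobayashi_le_sum (m := 0) (c := fun _ => z) fun _ _ => hz).antisymm ?_
  exact kobayashi_nonneg D z z

lemma DiscLink.kobayashi_le (h : DiscLink D z w l) : kobayashi D z w ≤ l := by
  have hc : ∀ i ≤ 1, (if i = 0 then z else w) ∈ D := fun i _ => by
    split_ifs
    exacts [h.left_mem, h.right_mem]
  have hsum := kobayashi_le_sum (m := 1) hc
  simp only [Finset.sum_range_one, if_true, one_ne_zero, if_false, zero_add] at hsum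
  exact hsum.trans h.lempert_le

lemma kobayashi_triangle {x y z : E} (hx : x ∈ D) (hy : y ∈ D) (hz : z ∈ D) :
    kobayashi D x z ≤ kobayashi D x y + kobayashi D y z := by
  refine le_of_forall_pos_le_add fun ε hε => ?_
  obtain ⟨m, c, rfl, rfl, hc, hclt⟩ := exists_chain_sum_lempert_lt hx hy (half_pos hε)
  obtain ⟨k, e, he0, rfl, he, helt⟩ := exists_chain_sum_lempert_lt hy hz (half_pos hε)
  set concat : ℕ → E := fun i => if i < m then c i else e (i - m) with hconcat
  have concat_left : ∀ i ≤ m, concat i = c i := fun i hi => by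
    rcases hi.lt_or_eq with h | rfl
    · exact if_pos h
    · simp only [hconcat, lt_irrefl, if_false, Nat.sub_self, he0]
  have concat_right : ∀ i, concat (m + i) = e i := fun i => by
    simp only [hconcat, add_lt_iff_neg_left, not_lt_zero, if_false, Nat.add_sub_cancel_left]
  have hmem : ∀ i ≤ m + k, concat i ∈ D := fun i hi => by
    rcases le_total i m with h | h
    · exact concat_left i h ▸ hc i h
    · obtain ⟨j, rfl⟩ := Nat.exists_eq_add_of_le h
      exact concat_right j ▸ he j (Nat.le_of_add_le_add_left hi)
  have hsum := kobayashi_le_sum hmem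
  have hleft : ∑ i ∈ Finset.range m, lempert D (concat i) (concat (i + 1)) =
      ∑ i ∈ Finset.range m, lempert D (c i) (c (i + 1)) :=
    Finset.sum_congr rfl fun i hi => by
      have := Finset.mem_range.1 hi
      rw [concat_left i this.le, concat_left (i + 1) this]
  simp only [Finset.sum_range_add, hleft, add_assoc, concat_right,
    concat_left 0 (Nat.zero_le m)] at hsum
  linarith

lemma kobayashi_comm (hz : z ∈ D) (hw : w ∈ D) : kobayashi D z w = kobayashi D w z := by
  have hle : ∀ {x y : E}, x ∈ D → y ∈ D → kobayashi D x y ≤ kobayashi D y x := by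
    intro x y hx hy
    refine le_of_forall_pos_le_add fun ε hε => ?_
    obtain ⟨m, c, rfl, rfl, hc, hlt⟩ := exists_chain_sum_lempert_lt hy hx hε
    have hsum := kobayashi_le_sum (c := fun i => c (m - i)) fun i (_ : i ≤ m) => hc _ (by omega)
    rw [← Finset.sum_range_reflect] at hsum
    have hreflect : ∀ i ∈ Finset.range m, lempert D (c (m - (m - 1 - i)))
        (c (m - (m - 1 - i + 1))) = lempert D (c i) (c (i + 1)) := by
      intro i hi
      have := Finset.mem_range.1 hi
      rw [lempert_comm, show m - (m - 1 - i + 1) = i by omega,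
        show m - (m - 1 - i) = i + 1 by omega]
    rw [Finset.sum_congr rfl hreflect, Nat.sub_self, Nat.sub_zero] at hsum
    exact hsum.trans hlt.le
  exact (hle hz hw).antisymm (hle hw hz)

/-- Any two points of `D` lie on a common analytic disc in `D`. Without this, `lempert` and hence
`kobayashi` may take the junk value `sInf ∅ = 0`. -/
def DiscConnected (D : Set E) : Prop :=
  ∀ ⦃a⦄, a ∈ D → ∀ ⦃b⦄, b ∈ D → ∃ l, DiscLink D a b l

lemma DiscConnected.kobayashi_le_of_subset (hD : DiscConnected D) (hDD' : D ⊆ D') (hz : z ∈ D)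
    (hw : w ∈ D) : kobayashi D' z w ≤ kobayashi D z w := by
  refine le_of_forall_pos_le_add fun ε hε => ?_
  obtain ⟨m, c, rfl, rfl, hc, hlt⟩ := exists_chain_sum_lempert_lt hz hw hε
  refine (kobayashi_le_sum fun i hi => hDD' (hc i hi)).trans (le_trans ?_ hlt.le)
  refine Finset.sum_le_sum fun i hi => le_of_forall_pos_le_add fun δ hδ => ?_
  have hi := Finset.mem_range.1 hi
  obtain ⟨l, hl⟩ := hD (hc i hi.le) (hc (i + 1) hi)
  obtain ⟨l', hl', hlt'⟩ := hl.exists_lt_lempert_add hδ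
  exact (hl'.mono hDD').lempert_le.trans hlt'.le

/-- A chain `z = c 0, …, c m = w` of analytic discs in `D`, the `i`-th of hyperbolic length
`l i ≤ h`. -/
structure IsDiscChain (D : Set E) (h : ℝ) (z w : E) (m : ℕ) (c : ℕ → E) (l : ℕ → ℝ) : Prop where
  first : c 0 = z
  last : c m = w
  link : ∀ i < m, DiscLink D (c i) (c (i + 1)) (l i)
  length_le : ∀ i < m, l i ≤ h

namespace IsDiscChain

variable {h : ℝ} {m : ℕ} {c : ℕ → E} {l : ℕ → ℝ}

lemma mem (hc : IsDiscChain D h z w m c l) (hz : z ∈ D) {i : ℕ} (hi : i ≤ m) : c i ∈ D := by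
  rcases i.eq_zero_or_pos with rfl | hpos
  · exact hc.first ▸ hz
  · simpa only [Nat.sub_add_cancel hpos] using (hc.link (i - 1) (by omega)).right_mem

lemma kobayashi_le_sum_Ico (hc : IsDiscChain D h z w m c l) (hz : z ∈ D) {i j : ℕ} (hij : i ≤ j)
    (hjm : j ≤ m) : kobayashi D (c i) (c j) ≤ ∑ n ∈ Finset.Ico i j, l n := by
  induction j, hij using Nat.le_induction with
  | base => rw [kobayashi_self (hc.mem hz hjm), Finset.Ico_self, Finset.sum_empty]
  | succ j hij ih =>
    rw [Finset.sum_Ico_succ_top hij]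
    have hj : j ≤ m := Nat.le_of_succ_le hjm
    exact (kobayashi_triangle (hc.mem hz (hij.trans hj)) (hc.mem hz hj) (hc.mem hz hjm)).trans
      (add_le_add (ih hj) (hc.link j hjm).kobayashi_le)

lemma exists_cons {a : E} {u : ℝ} (hc : IsDiscChain D h z w m c l) (hlink : DiscLink D a z u)
    (hu : u ≤ h) :
    ∃ m' c' l', IsDiscChain D h a w m' c' l' ∧
      ∑ i ∈ Finset.range m', l' i = u + ∑ i ∈ Finset.range m, l i := by
  refine ⟨m + 1, fun i => Nat.casesOn i a c, fun i => Nat.casesOn i u l, ⟨rfl, hc.last, ?_, ?_⟩,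
    (Finset.sum_range_succ' _ m).trans (add_comm _ _)⟩
  · rintro (_ | i) hi
    · change DiscLink D a (c 0) u
      exact hc.first.symm ▸ hlink
    · exact hc.link i (Nat.lt_of_succ_lt_succ hi)
  · rintro (_ | i) hi
    · exact hu
    · exact hc.length_le i (Nat.lt_of_succ_lt_succ hi)

lemma exists_prepend (hc : IsDiscChain D h z w m c l) (hh : 0 < h) {a : E} {u : ℝ}
    (hlink : DiscLink D a z u) :
    ∃ m' c' l', IsDiscChain D h a w m' c' l' ∧
      ∑ i ∈ Finset.range m', l' i = u + ∑ i ∈ Finset.range m, l i := by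
  obtain ⟨N, hN⟩ := exists_nat_ge (u / h)
  rw [div_le_iff₀ hh] at hN
  induction N generalizing a u with
  | zero => exact hc.exists_cons hlink (by linarith [show u ≤ 0 by simpa using hN])
  | succ N ih =>
    rcases le_total u h with hu | hu
    · exact hc.exists_cons hlink hu
    · obtain ⟨b, hab, hbz⟩ := hlink.exists_split ⟨hh.le, hu⟩
      obtain ⟨m₁, c₁, l₁, hc₁, hsum₁⟩ := ih hbz (by push_cast at hN; linarith)
      obtain ⟨m₂, c₂, l₂, hc₂, hsum₂⟩ := hc₁.exists_cons hab le_rfl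
      exact ⟨m₂, c₂, l₂, hc₂, by linarith⟩

end IsDiscChain

lemma DiscConnected.exists_isDiscChain_of_chain (hD : DiscConnected D) {h : ℝ} (hh : 0 < h)
    {m : ℕ} {c : ℕ → E} (hc : ∀ i ≤ m, c i ∈ D) {ε : ℝ} (hε : 0 < ε) :
    ∃ m' c' l', IsDiscChain D h (c 0) (c m) m' c' l' ∧
      ∑ i ∈ Finset.range m', l' i ≤
        ∑ i ∈ Finset.range m, (lempert D (c i) (c (i + 1)) + ε) := by
  induction m generalizing c with
  | zero => exact ⟨0, c, 0, ⟨rfl, rfl, by simp, by simp⟩, by simp⟩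
  | succ m ih =>
    obtain ⟨m', c', l', hc', hsum⟩ := ih (c := fun i => c (i + 1)) fun i hi => hc _ (by omega)
    obtain ⟨u, hu⟩ := hD (hc 0 (by omega)) (hc 1 (by omega))
    obtain ⟨u', hu', hlt⟩ := hu.exists_lt_lempert_add hε
    obtain ⟨m'', c'', l'', hc'', hsum'⟩ := hc'.exists_prepend hh hu'
    refine ⟨m'', c'', l'', hc'', ?_⟩
    rw [Finset.sum_range_succ', hsum', add_comm]
    exact add_le_add hsum hlt.le

lemma DiscConnected.exists_isDiscChain (hD : DiscConnected D) {h : ℝ} (hh : 0 < h) (hz : z ∈ D)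
    (hw : w ∈ D) {ε : ℝ} (hε : 0 < ε) :
    ∃ m c l, IsDiscChain D h z w m c l ∧ ∑ i ∈ Finset.range m, l i < kobayashi D z w + ε := by
  obtain ⟨m, c, rfl, rfl, hc, hlt⟩ := exists_chain_sum_lempert_lt hz hw (half_pos hε)
  have hη : 0 < ε / 2 / (m + 1) := by positivity
  obtain ⟨m', c', l', hc', hsum⟩ := hD.exists_isDiscChain_of_chain hh hc hη
  have hmη : m * (ε / 2 / (m + 1)) ≤ ε / 2 := by
    rw [← mul_div_assoc, div_le_iff₀ (by positivity)]
    nlinarith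
  rw [Finset.sum_add_distrib, Finset.sum_const, Finset.card_range, nsmul_eq_mul] at hsum
  exact ⟨m', c', l', hc', by linarith⟩

/-! ### Domains are disc-connected -/

lemma norm_cos_sub_cos_re_le (w : ℂ) :
    ‖Complex.cos w - Complex.cos w.re‖ ≤ Real.exp |w.im| - 1 := by
  have hcos : Complex.cos w - Complex.cos w.re =
      (Real.cos w.re * (Real.cosh |w.im| - 1) : ℝ) - (Real.sin w.re * Real.sinh w.im : ℝ) *
        Complex.I := by
    rw [Real.cosh_abs]
    conv_lhs => rw [← Complex.re_add_im w, Complex.cos_add_mul_I]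
    simp only [Complex.re_add_im]
    push_cast
    ring
  calc ‖Complex.cos w - Complex.cos w.re‖
      ≤ |Real.cos w.re| * |Real.cosh |w.im| - 1| + |Real.sin w.re| * |Real.sinh w.im| := by
        rw [hcos]
        refine (norm_sub_le _ _).trans_eq ?_
        rw [norm_mul, Complex.norm_I, mul_one, Complex.norm_real, Complex.norm_real, norm_mul,
          norm_mul]
        rfl
    _ ≤ 1 * (Real.cosh |w.im| - 1) + 1 * Real.sinh |w.im| := by
        rw [abs_of_nonneg (sub_nonneg.2 (Real.one_le_cosh |w.im|)), Real.abs_sinh]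
        gcongr
        exacts [sub_nonneg.2 (Real.one_le_cosh _), Real.abs_cos_le_one _,
          Real.abs_sin_le_one _]
    _ = Real.exp |w.im| - 1 := by rw [← Real.cosh_add_sinh]; ring

lemma one_sub_cos_div_two_mem_thickening_segment {w : ℂ} {ε : ℝ}
    (hw : Real.exp |w.im| - 1 < 2 * ε) :
    (1 - Complex.cos w) / 2 ∈ thickening ε (segment ℝ (0 : ℂ) 1) := by
  rw [mem_thickening_iff]
  refine ⟨(1 - Complex.cos w.re) / 2, ?_, ?_⟩
  · rw [segment_eq_image]
    refine ⟨(1 - Real.cos w.re) / 2, ⟨by linarith [Real.cos_le_one w.re],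
      by linarith [Real.neg_one_le_cos w.re]⟩, ?_⟩
    simp
  · rw [dist_eq_norm, div_sub_div_same, sub_sub_sub_cancel_left, norm_div, Complex.norm_two,
      norm_sub_rev]
    linarith [norm_cos_sub_cos_re_le w]

lemma log_one_add_tanh_sub_log_one_sub_tanh (v : ℝ) :
    Complex.log (1 + (Real.tanh v : ℝ)) - Complex.log (1 - (Real.tanh v : ℝ)) = (2 * v : ℝ) := by
  have hneg := Real.neg_one_lt_tanh v
  have hpos := Real.tanh_lt_one v
  rw [← Complex.ofReal_one, ← Complex.ofReal_add, ← Complex.ofReal_sub,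
    ← Complex.ofReal_log (by linarith), ← Complex.ofReal_log (by linarith),
    ← Complex.ofReal_sub, ← Real.log_div (by linarith) (by linarith)]
  have hartanh := artanh_tanh v
  rw [artanh] at hartanh
  congr 1
  linarith

/- The disc is mapped by `ζ ↦ c * log ((1 + ζ) / (1 - ζ))` into a thin strip around `ℝ`, which
`w ↦ (1 - cos w) / 2` folds onto a thin neighbourhood of `[0, 1]`. -/
lemma exists_discLink_thickening_segment {ε : ℝ} (hε : 0 < ε) :
    ∃ l, DiscLink (thickening ε (segment ℝ (0 : ℂ) 1)) 0 1 l := by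
  have hη : 0 < Real.log (1 + ε) := Real.log_pos (by linarith)
  set c : ℝ := Real.log (1 + ε) / (2 * Real.pi)
  have hcpos : 0 < c := by positivity
  have hcπ : c * (2 * Real.pi) = Real.log (1 + ε) := div_mul_cancel₀ _ (by positivity)
  have hadd : ∀ ζ ∈ ball (0 : ℂ) 1, 1 + ζ ∈ Complex.slitPlane := fun ζ hζ =>
    Complex.mem_slitPlane_of_norm_lt_one (mem_ball_zero_iff.1 hζ)
  have hsub : ∀ ζ ∈ ball (0 : ℂ) 1, 1 - ζ ∈ Complex.slitPlane := fun ζ hζ =>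
    sub_eq_add_neg 1 ζ ▸ hadd (-ζ) (by simpa using hζ)
  have hstrip : ∀ ζ : ℂ, |(c * (Complex.log (1 + ζ) - Complex.log (1 - ζ)) : ℂ).im| ≤
      Real.log (1 + ε) := fun ζ => by
    rw [Complex.im_ofReal_mul, Complex.sub_im, Complex.log_im, Complex.log_im, abs_mul,
      abs_of_pos hcpos, ← hcπ]
    gcongr
    linarith [abs_sub (1 + ζ).arg (1 - ζ).arg, Complex.abs_arg_le_pi (1 + ζ),
      Complex.abs_arg_le_pi (1 - ζ)]
  refine ⟨Real.pi / (2 * c), by positivity,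
    fun ζ => (1 - Complex.cos (c * (Complex.log (1 + ζ) - Complex.log (1 - ζ)))) / 2,
    ?_, fun ζ _ => one_sub_cos_div_two_mem_thickening_segment ?_, by simp, ?_⟩
  · have hlog_add : DifferentiableOn ℂ (fun ζ => Complex.log (1 + ζ)) (ball 0 1) :=
      .clog (by fun_prop) hadd
    have hlog_sub : DifferentiableOn ℂ (fun ζ => Complex.log (1 - ζ)) (ball 0 1) :=
      .clog (by fun_prop) hsub
    fun_prop
  · calc Real.exp |_| - 1 ≤ Real.exp (Real.log (1 + ε)) - 1 := by gcongr; exact hstrip ζ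
      _ < 2 * ε := by rw [Real.exp_log (by linarith)]; linarith
  · have hmul : c * (2 * (Real.pi / (2 * c))) = Real.pi := by field_simp
    dsimp only
    rw [log_one_add_tanh_sub_log_one_sub_tanh, ← Complex.ofReal_mul, hmul, Complex.cos_pi]
    norm_num

lemma exists_differentiable_of_joinedIn (hD : IsOpen D) (hab : JoinedIn D a b) :
    ∃ p : ℂ → E, Differentiable ℂ p ∧ p 0 = a ∧ p 1 = b ∧
      ∀ x ∈ Icc (0 : ℝ) 1, p x ∈ D := by
  obtain ⟨γ, hγ⟩ := hab
  obtain ⟨δ, hδ, hδD⟩ := (isCompact_range γ.continuous).exists_thickening_subset_open hD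
    (range_subset_iff.2 hγ)
  obtain ⟨n, hn, hn0⟩ := ((Metric.tendsto_nhds.1
    (bernsteinApproximation_uniform (E := E) γ.toContinuousMap) δ hδ).and
    (Filter.eventually_ne_atTop 0)).exists
  set p : ℂ → E := fun ζ => ∑ k : Fin (n + 1),
    ((n.choose k : ℂ) * ζ ^ (k : ℕ) * (1 - ζ) ^ (n - (k : ℕ))) • γ (bernstein.z k)
  have hp : ∀ x : unitInterval, p (x : ℝ) = bernsteinApproximation n γ.toContinuousMap x := by
    intro x
    rw [bernsteinApproximation.apply]
    refine Finset.sum_congr rfl fun k _ => ?_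
    rw [bernstein_apply, ← Complex.coe_smul]
    push_cast
    rfl
  have hpd : Differentiable ℂ p := by fun_prop
  refine ⟨p, hpd, ?_, ?_, fun x hx => hδD (mem_thickening_iff.2 ⟨γ ⟨x, hx⟩, ⟨_, rfl⟩, ?_⟩)⟩
  · simpa [bernsteinApproximation.apply_zero] using hp 0
  · simpa [bernsteinApproximation.apply_one hn0] using hp 1
  · rw [hp ⟨x, hx⟩]
    exact (ContinuousMap.dist_apply_le_dist _).trans_lt hn

lemma discConnected_of_isOpen_of_isConnected (hD : IsOpen D) (hconn : IsConnected D) :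
    DiscConnected D := by
  intro a ha b hb
  obtain ⟨p, hp, rfl, rfl, hpD⟩ := exists_differentiable_of_joinedIn hD
    ((hD.isConnected_iff_isPathConnected.1 hconn).joinedIn a ha b hb)
  have hsegment : segment ℝ (0 : ℂ) 1 ⊆ p ⁻¹' D := by
    rw [segment_eq_image]
    rintro _ ⟨x, hx, rfl⟩
    simpa using hpD x hx
  have hcompact : IsCompact (segment ℝ (0 : ℂ) 1) := by
    rw [segment_eq_image]
    exact isCompact_Icc.image (by fun_prop)
  obtain ⟨ε, hε, hεD⟩ :=
    hcompact.exists_thickening_subset_open (hD.preimage hp.continuous) hsegment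
  obtain ⟨l, hl⟩ := exists_discLink_thickening_segment hε
  exact ⟨l, hl.map hp.differentiableOn hεD⟩

/-! ### Connectedness of the complement -/

section Topology

variable {X : Type*} [TopologicalSpace X] {U V : Set X}

lemma sub_eq_sub_of_circleExp_eq (hU : IsPreconnected U) {f g : X → ℝ} (hf : ContinuousOn f U)
    (hg : ContinuousOn g U) (hfg : ∀ x ∈ U, Circle.exp (f x) = Circle.exp (g x)) {x y : X}
    (hx : x ∈ U) (hy : y ∈ U) : f x - g x = f y - g y := by
  have hdiscrete : IsDiscrete (AddSubgroup.zmultiples (2 * Real.pi) : Set ℝ) :=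
    ⟨inferInstanceAs (DiscreteTopology (AddSubgroup.zmultiples (2 * Real.pi)))⟩
  refine hU.constant_of_mapsTo hdiscrete (f := fun x => f x - g x) (hf.sub hg)
    (fun x hx => ?_) hx hy
  obtain ⟨m, hm⟩ := Circle.exp_eq_exp.1 (hfg x hx)
  exact ⟨m, by simp only [zsmul_eq_mul, hm]; ring⟩

lemma continuousOn_indicator_of_eq_zero {A : Set X} {f : X → ℝ} (hf : Continuous f)
    (hzero : ∀ x ∈ U ∩ frontier A, f x = 0) : ContinuousOn (A.indicator f) U := by
  classical
  rw [← piecewise_eq_indicator]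
  exact .piecewise hzero hf.continuousOn continuousOn_const

lemma disjoint_frontier_inter_of_subset_union {W A B : Set X} (hW : IsOpen W) (hA : IsOpen A)
    (hB : IsOpen B) (hWAB : W ⊆ A ∪ B) (hdisj : W ∩ (A ∩ B) = ∅) :
    Disjoint (frontier (A ∩ W)) W := by
  rw [(hA.inter hW).frontier_eq, disjoint_left]
  rintro x ⟨hxcl, hxA⟩ hxW
  have hxB : x ∈ B := (hWAB hxW).resolve_left fun h => hxA ⟨h, hxW⟩
  obtain ⟨y, hyB, hyA, hyW⟩ := mem_closure_iff.1 hxcl B hB hxB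
  exact hdisj.subset ⟨hyW, hyA, hyB⟩

lemma exists_continuousOn_eq_add_two_pi [NormalSpace X] (hU : IsOpen U) (hV : IsOpen V)
    (hUV : U ∪ V = univ) {A : Set X} (hA : Disjoint (frontier A) (U ∩ V)) :
    ∃ f g : X → ℝ, ContinuousOn f U ∧ ContinuousOn g V ∧
      (∀ t ∈ A, f t = g t + 2 * Real.pi) ∧ ∀ t ∉ A, f t = g t := by
  obtain ⟨ρ, hρ0, hρ1, -⟩ := exists_continuous_zero_one_of_isClosed hV.isClosed_compl
    hU.isClosed_compl (disjoint_compl_left_iff_subset.2 (compl_subset_iff_union.2 hUV))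
  have hfrontier : ∀ t ∈ frontier A, t ∈ U → t ∉ V := fun t ht htU htV =>
    disjoint_left.1 hA ht ⟨htU, htV⟩
  refine ⟨A.indicator fun t => 2 * Real.pi * ρ t,
    A.indicator fun t => 2 * Real.pi * ρ t - 2 * Real.pi,
    continuousOn_indicator_of_eq_zero (by fun_prop) fun t ht => ?_,
    continuousOn_indicator_of_eq_zero (by fun_prop) fun t ht => ?_, fun t ht => ?_, fun t ht => ?_⟩
  · simp [hρ0 (hfrontier t ht.2 ht.1)]
  · simp [hρ1 fun htU => hfrontier t ht.2 htU ht.1]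
  · simp only [indicator_of_mem ht, sub_add_cancel]
  · simp only [indicator_of_notMem ht]

/- If `A` were a proper relatively clopen part of `U ∩ V`, going from `x ∈ A` to `y ∉ A` inside `U`
and back inside `V` would be a loop with winding number one around the circle: the map to the circle
that winds once across `A` has no continuous logarithm. -/
lemma isPreconnected_inter_of_union_eq_univ [SimplyConnectedSpace X] [LocallyPathConnectedSpace X]
    [NormalSpace X] (hU : IsOpen U) (hV : IsOpen V) (hUconn : IsPreconnected U)
    (hVconn : IsPreconnected V) (hUV : U ∪ V = univ) : IsPreconnected (U ∩ V) := by
  rw [isPreconnected_iff_subset_of_disjoint]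
  intro A B hA hB hAB hdisj
  by_contra! hproper
  obtain ⟨y, hy, hyA⟩ := not_subset.1 hproper.1
  obtain ⟨x, hx, hxB⟩ := not_subset.1 hproper.2
  have hxA : x ∈ A ∩ (U ∩ V) := ⟨(hAB hx).resolve_right hxB, hx⟩
  obtain ⟨f, g, hf, hg, hfgA, hfg⟩ := exists_continuousOn_eq_add_two_pi hU hV hUV
    (disjoint_frontier_inter_of_subset_union (hU.inter hV) hA hB hAB hdisj)
  have hexp : ∀ t, Circle.exp (f t) = Circle.exp (g t) := fun t => by
    by_cases ht : t ∈ A ∩ (U ∩ V)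
    · rw [hfgA t ht, Circle.exp_add_two_pi]
    · rw [hfg t ht]
  have hcont : Continuous fun t => Circle.exp (f t) := by
    rw [← continuousOn_univ, ← hUV]
    exact (Circle.exp.continuous.comp_continuousOn hf).union_of_isOpen
      ((Circle.exp.continuous.comp_continuousOn hg).congr fun t _ => hexp t) hU hV
  obtain ⟨θ, ⟨-, hθ⟩, -⟩ :=
    Circle.isCoveringMap_exp.existsUnique_continuousMap_lifts ⟨_, hcont⟩ x (f x) rfl
  have hdiffU := sub_eq_sub_of_circleExp_eq hUconn θ.continuous.continuousOn hf
    (fun t _ => congrFun hθ t) hx.1 hy.1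
  have hdiffV := sub_eq_sub_of_circleExp_eq hVconn θ.continuous.continuousOn hg
    (fun t _ => (congrFun hθ t).trans (hexp t)) hx.2 hy.2
  linarith [hfgA x hxA, hfg y fun h => hyA h.1, Real.pi_pos]

end Topology

lemma exists_norm_add_smul_eq {x b : E} (hb : b ≠ 0) {R : ℝ} (hR : ‖x‖ ≤ R) :
    ∃ t : ℂ, ‖x + t • b‖ = R := by
  have hb' : 0 < ‖b‖ := norm_pos_iff.2 hb
  refine mem_range_of_exists_le_of_exists_ge (f := fun t : ℂ => ‖x + t • b‖) (by fun_prop)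
    ⟨0, by simpa using hR⟩ ⟨((R + ‖x‖) / ‖b‖ : ℝ), ?_⟩
  have hnorm : ‖(((R + ‖x‖) / ‖b‖ : ℝ) : ℂ) • b‖ = R + ‖x‖ := by
    rw [norm_smul, Complex.norm_real,
      Real.norm_of_nonneg (div_nonneg (by linarith [norm_nonneg x]) hb'.le),
      div_mul_cancel₀ _ hb'.ne']
  have hsub := norm_sub_le (x + (((R + ‖x‖) / ‖b‖ : ℝ) : ℂ) • b) x
  rw [add_sub_cancel_left, hnorm] at hsub
  linarith

lemma isPreconnected_compl_of_forall_exists_line [Nontrivial E] (hK : Bornology.IsBounded K)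
    (hlines : ∀ z ∉ K, ∃ b : E, b ≠ 0 ∧ ∀ t : ℂ, z + t • b ∉ K) : IsPreconnected Kᶜ := by
  refine isPreconnected_of_forall_pair fun x hx y hy => ?_
  obtain ⟨R₀, hR₀⟩ := hK.exists_norm_le
  set R := max (R₀ + 1) (max ‖x‖ ‖y‖)
  have hrank : 1 < Module.rank ℝ E := by
    rw [rank_real_of_complex]
    calc (1 : Cardinal) < 2 * 1 := by norm_num
      _ ≤ 2 * Module.rank ℂ E := by gcongr; exact Cardinal.one_le_iff_pos.2 rank_pos
  have hsphere : sphere (0 : E) R ⊆ Kᶜ := fun z hz hzK => by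
    rw [mem_sphere_zero_iff_norm] at hz
    linarith [hR₀ z hzK, le_max_left (R₀ + 1) (max ‖x‖ ‖y‖)]
  have hsphere_conn : IsPreconnected (sphere (0 : E) R) :=
    (isPathConnected_sphere hrank 0 (((norm_nonneg x).trans (le_max_left _ _)).trans
      (le_max_right _ _))).isConnected.isPreconnected
  have hline : ∀ z ∉ K, ‖z‖ ≤ R →
      ∃ L ⊆ Kᶜ, z ∈ L ∧ IsPreconnected L ∧ (L ∩ sphere 0 R).Nonempty := fun z hz hzR => by
    obtain ⟨b, hb, hbK⟩ := hlines z hz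
    obtain ⟨t, ht⟩ := exists_norm_add_smul_eq hb hzR
    exact ⟨range fun t : ℂ => z + t • b, range_subset_iff.2 hbK, ⟨0, by simp⟩,
      isPreconnected_range (by fun_prop), _, ⟨t, rfl⟩, mem_sphere_zero_iff_norm.2 ht⟩
  obtain ⟨Lx, hLx, hxLx, hLx_conn, p, hp, hpR⟩ :=
    hline x hx ((le_max_left _ _).trans (le_max_right _ _))
  obtain ⟨Ly, hLy, hyLy, hLy_conn, q, hq, hqR⟩ :=
    hline y hy ((le_max_right _ _).trans (le_max_right _ _))
  exact ⟨Lx ∪ sphere 0 R ∪ Ly, union_subset (union_subset hLx hsphere) hLy, .inl (.inl hxLx),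
    .inr hyLy, (hLx_conn.union p hp hpR hsphere_conn).union q (.inr hqR) hq hLy_conn⟩

lemma isConnected_sdiff_of_forall_exists_line [Nontrivial E] {G : Set E} (hG : IsOpen G)
    (hGconn : IsConnected G) (hK : IsCompact K) (hKG : K ⊆ G)
    (hlines : ∀ z ∉ K, ∃ b : E, b ≠ 0 ∧ ∀ t : ℂ, z + t • b ∉ K) : IsConnected (G \ K) := by
  refine ⟨nonempty_iff_ne_empty.2 fun hempty => ?_, ?_⟩
  · have hGK : G = K := (sdiff_eq_empty.1 hempty).antisymm hKG
    have : NoncompactSpace E := NormedSpace.noncompactSpace ℂ E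
    have hclopen : IsClopen K := ⟨hK.isClosed, hGK ▸ hG⟩
    exact noncompact_univ E (hclopen.eq_univ (hGK ▸ hGconn.nonempty) ▸ hK)
  · rw [sdiff_eq]
    refine isPreconnected_inter_of_union_eq_univ hG hK.isClosed.isOpen_compl hGconn.isPreconnected
      (isPreconnected_compl_of_forall_exists_line hK.isBounded hlines)
      (eq_univ_of_forall fun x => ?_)
    exact or_iff_not_imp_right.2 fun h => hKG (not_notMem.1 h)

/-! ### Uniform bounds on compact sets and near `K` -/

lemma discLink_of_ball_subset {ε : ℝ} {x y : E} (hball : ball x ε ⊆ D)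
    (hy : y ∈ ball x (ε / 2)) : DiscLink D x y (artanh (1 / 2)) := by
  have hmaps : MapsTo (fun t : ℂ => x + (2 * t) • (y - x)) (ball 0 1) D := fun t ht => by
    refine hball ?_
    rw [mem_ball_zero_iff] at ht
    rw [mem_ball_iff_norm] at hy
    rw [mem_ball_iff_norm, add_sub_cancel_left, norm_smul, norm_mul, Complex.norm_two]
    nlinarith [norm_nonneg t, norm_nonneg (y - x)]
  simpa using discLink_of_disc (by fun_prop) hmaps (α := 1 / 2) (by norm_num)

lemma exists_forall_kobayashi_le_of_isCompact (hD : IsOpen D) {M : Set E} (hM : IsCompact M)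
    (hMD : M ⊆ D) {o : E} (ho : o ∈ D) : ∃ B, ∀ x ∈ M, kobayashi D x o ≤ B := by
  refine hM.induction_on ⟨0, by simp⟩ (fun s t hst ⟨B, hB⟩ => ⟨B, fun x hx => hB x (hst hx)⟩)
    (fun s t ⟨B₁, h₁⟩ ⟨B₂, h₂⟩ => ⟨max B₁ B₂, fun x hx => hx.elim
      (fun h => (h₁ x h).trans (le_max_left _ _)) (fun h => (h₂ x h).trans (le_max_right _ _))⟩)
    (fun x hx => ?_)
  obtain ⟨ε, hε, hball⟩ := Metric.isOpen_iff.1 hD x (hMD hx)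
  refine ⟨ball x (ε / 2), mem_nhdsWithin_of_mem_nhds (ball_mem_nhds x (half_pos hε)),
    artanh (1 / 2) + kobayashi D x o, fun y hy => ?_⟩
  have hlink := discLink_of_ball_subset hball hy
  exact (kobayashi_triangle hlink.right_mem hlink.left_mem ho).trans
    (by gcongr; exact hlink.symm.kobayashi_le)

lemma exists_first_exit {X : Type*} [TopologicalSpace X] {A V : Set X} (hA : IsClosed A)
    (hV : IsOpen V) (hVA : V ⊆ A) {f : ℝ → X} (hf : Continuous f) {T : ℝ} (hT : 0 ≤ T)
    (h0 : f 0 ∈ A) (hfT : f T ∉ V) : ∃ t ∈ Icc 0 T, f t ∉ V ∧ ∀ s ∈ Icc 0 t, f s ∈ A := by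
  obtain ⟨t, ⟨htT, htV⟩, hleast⟩ := (isCompact_Icc.inter_right
    (hV.isClosed_compl.preimage hf)).exists_isLeast ⟨T, right_mem_Icc.2 hT, hfT⟩
  refine ⟨t, htT, htV, fun s hs => ?_⟩
  rcases htT.1.eq_or_lt with rfl | htpos
  · rwa [hs.2.antisymm hs.1]
  · refine closure_minimal (fun u hu => ?_) (hA.preimage hf) (closure_Ico htpos.ne ▸ hs)
    by_contra huA
    exact hu.2.not_ge (hleast ⟨⟨hu.1, hu.2.le.trans htT.2⟩, fun huV => huA (hVA huV)⟩)

lemma DiscLink.of_segment {y b : E} {t T r δ : ℝ} (ht : t ∈ Icc 0 T) (hT : 0 < T) (hb : ‖b‖ = 1)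
    (hsub : cthickening δ (cthickening r K) ⊆ D)
    (hsegment : ∀ s ∈ Icc 0 t, y + (s : ℂ) • b ∈ cthickening r K)
    (hline : ∀ s : ℂ, y + s • b ∉ K)
    (hlink : DiscLink (thickening (δ / T) (segment ℝ (0 : ℂ) 1)) 0 1 l) :
    DiscLink (D \ K) y (y + (t : ℂ) • b) l := by
  have hmaps : MapsTo (fun ζ : ℂ => y + (ζ * t) • b) (thickening (δ / T) (segment ℝ (0 : ℂ) 1))
      (D \ K) := fun ζ hζ => by
    refine ⟨hsub ?_, hline _⟩
    rw [mem_thickening_iff, segment_eq_image] at hζ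
    obtain ⟨_, ⟨s, hs, rfl⟩, hdist⟩ := hζ
    have hs' : s * t ∈ Icc 0 t :=
      ⟨mul_nonneg hs.1 ht.1, mul_le_of_le_one_left ht.1 hs.2⟩
    refine mem_cthickening_of_dist_le _ _ _ _ (hsegment _ hs') ?_
    calc dist (y + (ζ * t) • b) (y + ((s * t : ℝ) : ℂ) • b)
        = dist ζ ((1 - s) • (0 : ℂ) + s • 1) * t := by
          rw [dist_eq_norm, dist_eq_norm, add_sub_add_left_eq_sub, ← sub_smul, norm_smul, hb,
            mul_one, Complex.ofReal_mul, ← sub_mul, norm_mul, Complex.norm_real,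
            Real.norm_of_nonneg ht.1]
          simp
      _ ≤ δ / T * T := by gcongr; exacts [ht.1, dist_nonneg.trans hdist.le, ht.2]
      _ = δ := div_mul_cancel₀ _ hT.ne'
  simpa using hlink.map (by fun_prop) hmaps

/- The line through `y` avoiding `K` is followed until it first reaches distance `r` from `K`; a
thin disc around this segment then joins `y` to a fixed compact subset of `G \ K`. -/
lemma exists_forall_kobayashi_sdiff_le_of_mem_cthickening [ProperSpace E] {G : Set E}
    (hG : IsOpen G) (hK : IsCompact K) {r δ : ℝ} (hr : 0 < r) (hδ : 0 < δ)
    (hsub : cthickening (δ + r) K ⊆ G)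
    (hlines : ∀ z ∉ K, ∃ b : E, b ≠ 0 ∧ ∀ t : ℂ, z + t • b ∉ K) {o : E} (ho : o ∈ G \ K) :
    ∃ B, 0 ≤ B ∧ ∀ y ∈ cthickening r K \ K, kobayashi (G \ K) y o ≤ B := by
  have hsub' : cthickening δ (cthickening r K) ⊆ G :=
    (cthickening_cthickening_subset hδ.le hr.le K).trans hsub
  have hshell : cthickening r K \ thickening r K ⊆ G \ K := fun x hx =>
    ⟨hsub' (self_subset_cthickening _ hx.1), fun h => hx.2 (self_subset_thickening hr K h)⟩
  obtain ⟨B, hB⟩ := exists_forall_kobayashi_le_of_isCompact (hG.sdiff hK.isClosed)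
    (hK.cthickening.diff isOpen_thickening) hshell ho
  obtain ⟨ρ, hρ, hρK⟩ := (hK.isBounded.cthickening (δ := r)).exists_pos_norm_le
  obtain ⟨l, hlink⟩ := exists_discLink_thickening_segment (div_pos hδ (by positivity : 0 < 3 * ρ))
  refine ⟨max 0 (l + B), le_max_left _ _, fun y hy => le_max_of_le_right ?_⟩
  obtain ⟨b, hb, hbK⟩ := hlines y hy.2
  have hb' : ‖b‖ ≠ 0 := norm_ne_zero_iff.2 hb
  set e : E := ((‖b‖⁻¹ : ℝ) : ℂ) • b with he
  have he_norm : ‖e‖ = 1 := by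
    rw [he, norm_smul, Complex.norm_real, norm_inv, norm_norm, inv_mul_cancel₀ hb']
  have heK : ∀ s : ℂ, y + s • e ∉ K := fun s => by rw [he, smul_smul]; exact hbK _
  have hfar : y + ((3 * ρ : ℝ) : ℂ) • e ∉ thickening r K := fun h => by
    have hnorm := norm_sub_le (y + ((3 * ρ : ℝ) : ℂ) • e) y
    rw [add_sub_cancel_left, norm_smul, he_norm, Complex.norm_real,
      Real.norm_of_nonneg (by positivity)] at hnorm
    linarith [hρK _ (thickening_subset_cthickening r K h), hρK y hy.1]
  obtain ⟨t, ht, htK, hsegment⟩ := exists_first_exit (f := fun s : ℝ => y + (s : ℂ) • e)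
    isClosed_cthickening isOpen_thickening (thickening_subset_cthickening r K) (by fun_prop)
    (by positivity) (by simpa using hy.1) hfar
  have hexit := hlink.of_segment ht (by positivity) he_norm hsub' hsegment heK
  exact (kobayashi_triangle hexit.left_mem hexit.right_mem ho).trans
    (add_le_add hexit.kobayashi_le (hB _ ⟨hsegment t (right_mem_Icc.2 ht.1), htK⟩))

/-! ### The cost of avoiding `K` -/

lemma one_sub_norm_le_two_mul_exp {φ : ℂ → E} (hφ : DifferentiableOn ℂ φ (ball 0 1))
    (hφD : MapsTo φ (ball 0 1) D) {ζ : ℂ} (hζ : ζ ∈ ball (0 : ℂ) 1) {o : E} (ho : o ∈ D) :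
    1 - ‖ζ‖ ≤ 2 * Real.exp (-2 * (kobayashi D (φ 0) o - kobayashi D (φ ζ) o)) := by
  have hlink := discLink_of_disc hφ hφD hζ
  have htri := kobayashi_triangle hlink.left_mem hlink.right_mem ho
  have htanh := one_sub_tanh_le (artanh ‖ζ‖)
  rw [tanh_artanh ⟨by linarith [norm_nonneg ζ], mem_ball_zero_iff.1 hζ⟩] at htanh
  refine htanh.trans ?_
  gcongr 2 * Real.exp ?_
  linarith [hlink.kobayashi_le]

lemma kobayashi_sdiff_le_of_forall_le_norm {φ : ℂ → E} (hφ : DifferentiableOn ℂ φ (ball 0 1))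
    (hφD : MapsTo φ (ball 0 1) D) {q : ℝ} (hq : q ∈ Ioc 0 1)
    (hφK : ∀ ζ ∈ ball (0 : ℂ) 1, φ ζ ∈ K → q ≤ ‖ζ‖) (hl : 0 ≤ l) (hlq : 4 * l ≤ q) :
    φ (Real.tanh l : ℝ) ∉ K ∧
      kobayashi (D \ K) (φ 0) (φ (Real.tanh l : ℝ)) ≤ l + 4 * l * ((1 - q) / q) := by
  have htanh := tanh_nonneg hl
  have htanh_le := tanh_le_two_mul hl
  have hlink := discLink_sdiff_of_forall_le_norm hφ hφD hq hφK
    (x := Real.tanh l) ⟨htanh, by linarith [hq.1]⟩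
  refine ⟨hlink.right_mem.2, hlink.kobayashi_le.trans ?_⟩
  calc artanh (Real.tanh l / q)
      ≤ artanh (Real.tanh l) + 2 * (Real.tanh l / q - Real.tanh l) :=
        artanh_le_add_two_mul_sub htanh (le_div_self htanh hq.1 hq.2)
          (by rw [div_le_iff₀ hq.1]; linarith)
    _ = l + 2 * Real.tanh l * ((1 - q) / q) := by
        rw [artanh_tanh, sub_div, div_self hq.1.ne']; ring
    _ ≤ l + 2 * (2 * l) * ((1 - q) / q) := by
        gcongr
        exact div_nonneg (sub_nonneg.2 hq.2) hq.1.le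
    _ = l + 4 * l * ((1 - q) / q) := by ring

lemma div_le_norm_of_disc_of_notMem_cthickening {ρ : ℝ} (hρ : 0 < ρ) (hD : ∀ x ∈ D, ‖x‖ ≤ ρ)
    {φ : ℂ → E} (hφ : DifferentiableOn ℂ φ (ball 0 1)) (hφD : MapsTo φ (ball 0 1) D) {δ : ℝ}
    (hφ0 : φ 0 ∉ cthickening δ K) {ζ : ℂ} (hζ : ζ ∈ ball (0 : ℂ) 1) (hζK : φ ζ ∈ K) :
    δ / (2 * ρ) ≤ ‖ζ‖ := by
  by_contra! hlt
  refine hφ0 (mem_cthickening_of_dist_le _ _ _ _ hζK ?_)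
  rw [dist_comm]
  calc dist (φ ζ) (φ 0) ≤ 2 * ρ * ‖ζ‖ := dist_disc_le hD hφ hφD hζ
    _ ≤ 2 * ρ * (δ / (2 * ρ)) := by gcongr
    _ = δ := mul_div_cancel₀ _ (by positivity)

/- A disc centred outside `cthickening δ K` meets `K` only where `‖ζ‖` is bounded below, and only
within `O(exp (-2 * kobayashi G a o))` of the unit circle; shrink it to avoid both regions. -/
lemma exists_forall_kobayashi_sdiff_le_of_discLink {G : Set E} (hG : Bornology.IsBounded G)
    {o : E} (ho : o ∈ G) {B : ℝ} (hB : ∀ x ∈ K, kobayashi G x o ≤ B) {δ : ℝ} (hδ : 0 < δ) :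
    ∃ s > 0, ∃ C ≥ 0, ∀ a b l, DiscLink G a b l → l ≤ s → a ∉ cthickening δ K →
      b ∉ K ∧ kobayashi (G \ K) a b ≤ l + C * (l * Real.exp (-2 * kobayashi G a o)) := by
  obtain ⟨ρ, hρ, hGρ⟩ := hG.exists_pos_norm_le
  set s := min 1 (δ / (2 * ρ))
  have hs0 : 0 < s := lt_min one_pos (by positivity)
  refine ⟨s / 4, by positivity, 8 * Real.exp (2 * B) / s, by positivity, ?_⟩
  rintro _ _ l ⟨hl, φ, hφ, hφG, rfl, rfl⟩ hls ha
  set P := 2 * Real.exp (-2 * (kobayashi G (φ 0) o - B)) with hP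
  have hPexp : P = 2 * Real.exp (2 * B) * Real.exp (-2 * kobayashi G (φ 0) o) := by
    rw [hP, mul_assoc, ← Real.exp_add]; ring_nf
  have hP0 : 0 < P := by positivity
  set q := max s (1 - P)
  have hsq : s ≤ q := le_max_left _ _
  have hq0 : 0 < q := hs0.trans_le hsq
  have hq1 : q ≤ 1 := max_le (min_le_left _ _) (by linarith)
  have hφK : ∀ ζ ∈ ball (0 : ℂ) 1, φ ζ ∈ K → q ≤ ‖ζ‖ := by
    refine fun ζ hζ hζK => max_le ((min_le_right _ _).trans
      (div_le_norm_of_disc_of_notMem_cthickening hρ hGρ hφ hφG ha hζ hζK)) ?_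
    have hexp : 2 * Real.exp (-2 * (kobayashi G (φ 0) o - kobayashi G (φ ζ) o)) ≤ P := by
      rw [hP]
      gcongr 2 * Real.exp ?_
      linarith [hB _ hζK]
    linarith [one_sub_norm_le_two_mul_exp hφ hφG hζ ho]
  obtain ⟨hb, hle⟩ := kobayashi_sdiff_le_of_forall_le_norm hφ hφG ⟨hq0, hq1⟩ hφK hl (by linarith)
  refine ⟨hb, hle.trans ?_⟩
  calc l + 4 * l * ((1 - q) / q) ≤ l + 4 * l * (P / s) := by
        gcongr
        linarith [le_max_right s (1 - P)]
    _ = l + 8 * Real.exp (2 * B) / s * (l * Real.exp (-2 * kobayashi G (φ 0) o)) := by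
        rw [hPexp]; ring

/- While the sequence visits `L` nothing is known about the cost of its steps; all that matters is
that it leaves and re-enters `D` through `N`, whose points are within `B` of each other. -/
lemma le_sum_add_of_step_le {X : Type*} {d : X → X → ℝ} {D L N : Set X} {c : ℕ → X} {e : ℕ → ℝ}
    {m : ℕ} {B : ℝ} (htri : ∀ x ∈ D, ∀ y ∈ D, ∀ z ∈ D, d x z ≤ d x y + d y z)
    (hself : d (c 0) (c 0) ≤ 0) (h0 : c 0 ∈ D) (hm : c m ∈ D) (hLN : L ⊆ N)
    (hmem : ∀ i ≤ m, c i ∉ L → c i ∈ D) (hin : ∀ i < m, c i ∈ L → c (i + 1) ∈ N)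
    (hout : ∀ i < m, c i ∉ L → c (i + 1) ∈ D ∧ d (c i) (c (i + 1)) ≤ e i)
    (he : ∀ i < m, 0 ≤ e i) (hB : 0 ≤ B) (hN : ∀ x ∈ N ∩ D, ∀ y ∈ N ∩ D, d x y ≤ B) :
    d (c 0) (c m) ≤ ∑ i ∈ Finset.range m, e i + B := by
  have hinv : ∀ n ≤ m,
      (c n ∈ D ∧ d (c 0) (c n) ≤ ∑ i ∈ Finset.range n, e i) ∨
      ((∀ q ∈ N ∩ D, d (c 0) q ≤ ∑ i ∈ Finset.range n, e i + B) ∧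
        (c n ∈ D → d (c 0) (c n) ≤ ∑ i ∈ Finset.range n, e i + B)) := by
    intro n hn
    induction n with
    | zero => exact .inl ⟨h0, by simpa using hself⟩
    | succ n ih =>
      have hnm : n < m := hn
      have hen := he n hnm
      rw [Finset.sum_range_succ]
      by_cases hnL : c n ∈ L
      · have hnear : ∀ q ∈ N ∩ D, d (c 0) q ≤ ∑ i ∈ Finset.range n, e i + e n + B := by
          intro q hq
          rcases ih hnm.le with ⟨hnD, hle⟩ | ⟨hle, -⟩
          · linarith [htri _ h0 _ hnD _ hq.2, hN _ ⟨hLN hnL, hnD⟩ q hq]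
          · linarith [hle q hq]
        exact .inr ⟨hnear, fun hD => hnear _ ⟨hin n hnm hnL, hD⟩⟩
      · obtain ⟨hD, hstep⟩ := hout n hnm hnL
        have hnD := hmem n hnm.le hnL
        have hlast := htri _ h0 _ hnD _ hD
        rcases ih hnm.le with ⟨-, hle⟩ | ⟨hnear, hle⟩
        · exact .inl ⟨hD, by linarith⟩
        · exact .inr ⟨fun q hq => by linarith [hnear q hq], fun _ => by linarith [hle hnD]⟩
  rcases hinv m le_rfl with ⟨-, hle⟩ | ⟨-, hle⟩
  · linarith
  · exact hle hm

lemma IsDiscChain.abs_sum_sub_kobayashi_le {h : ℝ} {m : ℕ} {c : ℕ → E} {l : ℕ → ℝ}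
    (hc : IsDiscChain D h z w m c l) (hz : z ∈ D) {o : E} (ho : o ∈ D)
    (hsum : ∑ i ∈ Finset.range m, l i ≤ kobayashi D z w + 1) {i : ℕ} (hi : i ≤ m) :
    |∑ j ∈ Finset.range i, l j - kobayashi D z o| ≤ kobayashi D (c i) o + 1 := by
  have hw : w ∈ D := hc.last ▸ hc.mem hz le_rfl
  have hci := hc.mem hz hi
  have hfirst : kobayashi D z (c i) ≤ ∑ j ∈ Finset.range i, l j := by
    simpa only [hc.first, Finset.range_eq_Ico] using hc.kobayashi_le_sum_Ico hz i.zero_le hi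
  have hlast : kobayashi D (c i) w ≤ ∑ j ∈ Finset.Ico i m, l j := by
    simpa only [hc.last] using hc.kobayashi_le_sum_Ico hz hi le_rfl
  have hsplit := Finset.sum_range_add_sum_Ico l hi
  rw [abs_le]
  constructor
  · linarith [kobayashi_triangle hz hci ho]
  · linarith [kobayashi_triangle hz ho hw, kobayashi_triangle ho hci hw, kobayashi_comm ho hci]

lemma sum_add_mul_tanh_sub_tanh_le {C : ℝ} (hC : 0 ≤ C) (l x : ℕ → ℝ) (m : ℕ) :
    ∑ i ∈ Finset.range m, (l i + C * (Real.tanh (x (i + 1)) - Real.tanh (x i))) ≤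
      ∑ i ∈ Finset.range m, l i + 2 * C := by
  rw [Finset.sum_add_distrib, ← Finset.mul_sum, Finset.sum_range_sub fun i => Real.tanh (x i)]
  have : C * (Real.tanh (x m) - Real.tanh (x 0)) ≤ C * 2 := by
    gcongr
    linarith [Real.tanh_lt_one (x m), Real.neg_one_lt_tanh (x 0)]
  linarith

lemma IsDiscChain.kobayashi_sdiff_le {G L N : Set E} {h C B : ℝ} {m : ℕ} {c : ℕ → E} {l : ℕ → ℝ}
    (hc : IsDiscChain G h z w m c l) (hz : z ∈ G \ K) (hw : w ∈ G \ K) {o : E} (ho : o ∈ G)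
    (hsum : ∑ i ∈ Finset.range m, l i ≤ kobayashi G z w + 1) (hh : h ≤ 1)
    (hKL : K ⊆ L) (hLN : L ⊆ N) (hin : ∀ a b l, DiscLink G a b l → l ≤ h → a ∈ L → b ∈ N)
    (hC : 0 ≤ C) (hout : ∀ a b l, DiscLink G a b l → l ≤ h → a ∉ L →
      b ∉ K ∧ kobayashi (G \ K) a b ≤ l + C * (l * Real.exp (-2 * kobayashi G a o)))
    (hB : 0 ≤ B) (hN : ∀ x ∈ N ∩ (G \ K), ∀ y ∈ N ∩ (G \ K), kobayashi (G \ K) x y ≤ B) :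
    kobayashi (G \ K) z w ≤ kobayashi G z w + 1 + 2 * (C * Real.exp 3) + B := by
  obtain ⟨rfl, rfl⟩ : c 0 = z ∧ c m = w := ⟨hc.first, hc.last⟩
  set x : ℕ → ℝ := fun i => ∑ j ∈ Finset.range i, l j - kobayashi G (c 0) o with hx
  have hx_succ : ∀ i, x (i + 1) = x i + l i := fun i => by
    simp only [hx, Finset.sum_range_succ]; ring
  have hpotential : ∀ i < m, C * (l i * Real.exp (-2 * kobayashi G (c i) o)) ≤
      C * Real.exp 3 * (Real.tanh (x (i + 1)) - Real.tanh (x i)) := fun i hi => by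
    rw [hx_succ, mul_assoc C]
    exact mul_le_mul_of_nonneg_left (mul_exp_le_exp_mul_tanh_add_sub_tanh
      ⟨(hc.link i hi).1, (hc.length_le i hi).trans hh⟩
      (hc.abs_sum_sub_kobayashi_le hz.1 ho hsum hi.le)) hC
  have hsplice := le_sum_add_of_step_le (d := kobayashi (G \ K)) (D := G \ K) (L := L) (N := N)
    (c := c) (m := m) (B := B)
    (e := fun i => l i + C * Real.exp 3 * (Real.tanh (x (i + 1)) - Real.tanh (x i)))
    (fun _ h₁ _ h₂ _ h₃ => kobayashi_triangle h₁ h₂ h₃) (kobayashi_self hz).le hz hw hLN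
    (fun i hi hiL => ⟨hc.mem hz.1 hi, fun hK => hiL (hKL hK)⟩)
    (fun i hi => hin _ _ _ (hc.link i hi) (hc.length_le i hi))
    (fun i hi hiL => by
      obtain ⟨hK, hle⟩ := hout _ _ _ (hc.link i hi) (hc.length_le i hi) hiL
      exact ⟨⟨hc.mem hz.1 hi, hK⟩, hle.trans (by linarith [hpotential i hi])⟩)
    (fun i hi => by
      have hl := (hc.link i hi).1
      linarith [hpotential i hi, show 0 ≤ C * (l i * Real.exp (-2 * kobayashi G (c i) o)) by
        positivity])
    hB hN
  linarith [sum_add_mul_tanh_sub_tanh_le (C := C * Real.exp 3) (by positivity) l x m]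

lemma exists_forall_kobayashi_sdiff_le_add [ProperSpace E] [Nontrivial E] {G : Set E}
    (hG : IsOpen G) (hGconn : IsConnected G) (hGbdd : Bornology.IsBounded G) (hK : IsCompact K)
    (hKG : K ⊆ G) (hlines : ∀ z ∉ K, ∃ b : E, b ≠ 0 ∧ ∀ t : ℂ, z + t • b ∉ K) :
    ∃ C ≥ 0, ∀ z ∈ G \ K, ∀ w ∈ G \ K, kobayashi (G \ K) z w ≤ kobayashi G z w + C := by
  obtain ⟨o, ho⟩ := (isConnected_sdiff_of_forall_exists_line hG hGconn hK hKG hlines).nonempty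
  obtain ⟨ε, hε, hεG⟩ := hK.exists_cthickening_subset_open hG hKG
  obtain ⟨δ, hδ, rfl⟩ : ∃ δ > 0, δ + 2 * δ = ε := ⟨ε / 3, by positivity, by ring⟩
  obtain ⟨B, hB, hnear⟩ := exists_forall_kobayashi_sdiff_le_of_mem_cthickening hG hK
    (by positivity) hδ hεG hlines ho
  obtain ⟨B₀, hB₀⟩ := exists_forall_kobayashi_le_of_isCompact hG hK hKG ho.1
  obtain ⟨s, hs, C, hC, hcost⟩ :=
    exists_forall_kobayashi_sdiff_le_of_discLink hGbdd ho.1 hB₀ hδ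
  obtain ⟨ρ, hρ, hGρ⟩ := hGbdd.exists_pos_norm_le
  set h := min s (min 1 (δ / (4 * ρ)))
  have hh_dist : 4 * ρ * h ≤ δ := by
    rw [mul_comm, ← le_div_iff₀ (by positivity)]
    exact (min_le_right _ _).trans (min_le_right _ _)
  have hin : ∀ a b l, DiscLink G a b l → l ≤ h → a ∈ cthickening δ K →
      b ∈ cthickening (2 * δ) K := fun a b l hlink hl ha => by
    rw [two_mul]
    refine cthickening_cthickening_subset hδ.le hδ.le K (mem_cthickening_of_dist_le b a _ _ ha ?_)
    exact (hlink.dist_le hGρ).trans (le_trans (by gcongr) hh_dist)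
  have hN : ∀ x ∈ cthickening (2 * δ) K ∩ (G \ K), ∀ y ∈ cthickening (2 * δ) K ∩ (G \ K),
      kobayashi (G \ K) x y ≤ B + B := fun x hx y hy => by
    refine (kobayashi_triangle hx.2 ho hy.2).trans (add_le_add (hnear x ⟨hx.1, hx.2.2⟩) ?_)
    exact kobayashi_comm hy.2 ho ▸ hnear y ⟨hy.1, hy.2.2⟩
  refine ⟨1 + 2 * (C * Real.exp 3) + (B + B), by positivity, fun z hz w hw => ?_⟩
  have hh0 : 0 < h := lt_min hs (lt_min one_pos (by positivity))
  obtain ⟨m, c, l, hc, hsum⟩ :=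
    (discConnected_of_isOpen_of_isConnected hG hGconn).exists_isDiscChain hh0 hz.1 hw.1 one_pos
  have hle := hc.kobayashi_sdiff_le hz hw ho.1 hsum.le ((min_le_right _ _).trans (min_le_left _ _))
    (self_subset_cthickening K) (cthickening_mono (by linarith) K) hin hC
    (fun a b l hlink hl => hcost a b l hlink (hl.trans (min_le_left _ _))) (by positivity) hN
  linarith

end AnalyticDiscs

lemma GromovHyperbolicWith.of_le_of_le_add {X : Type*} {D D' : Set X} {d d' : X → X → ℝ} {C : ℝ}
    (h : GromovHyperbolicWith D' d') (hDD' : D ⊆ D')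
    (hd : ∀ x ∈ D, ∀ y ∈ D, d' x y ≤ d x y ∧ d x y ≤ d' x y + C) :
    GromovHyperbolicWith D d := by
  obtain ⟨C₀, hC₀⟩ := h
  refine ⟨C₀ + 3 * C, fun p hp q hq x hx w hw => ?_⟩
  have hmin : min (d p w + d w x - d p x) (d x w + d w q - d x q) ≤
      min (d' p w + d' w x - d' p x) (d' x w + d' w q - d' x q) + 2 * C := by
    rw [← min_add_add_right]
    refine min_le_min ?_ ?_
    · linarith [(hd p hp w hw).2, (hd w hw x hx).2, (hd p hp x hx).1]
    · linarith [(hd x hx w hw).2, (hd w hw q hq).2, (hd x hx q hq).1]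
  linarith [hC₀ p (hDD' hp) q (hDD' hq) x (hDD' hx) w (hDD' hw), (hd p hp w hw).1,
    (hd w hw q hq).1, (hd p hp q hq).2]

theorem kobayashi_quasi_isometric_on_complement_of_compact_general {E : Type*}
    [NormedAddCommGroup E] [NormedSpace ℂ E] [ProperSpace E] [Nontrivial E] {G K : Set E}
    (hG : IsOpen G) (hGconn : IsConnected G) (hGbdd : Bornology.IsBounded G) (hK : IsCompact K)
    (hKG : K ⊆ G) (hlines : ∀ z ∉ K, ∃ b : E, b ≠ 0 ∧ ∀ t : ℂ, z + t • b ∉ K) :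
    IsConnected (G \ K) ∧
    (∃ C, 0 ≤ C ∧ ∀ z ∈ G \ K, ∀ w ∈ G \ K,
      kobayashi G z w ≤ kobayashi (G \ K) z w ∧
      kobayashi (G \ K) z w ≤ kobayashi G z w + C) ∧
    (GromovHyperbolicWith G (kobayashi G) →
      GromovHyperbolicWith (G \ K) (kobayashi (G \ K))) := by
  have hconn := isConnected_sdiff_of_forall_exists_line hG hGconn hK hKG hlines
  have hdisc := discConnected_of_isOpen_of_isConnected (hG.sdiff hK.isClosed) hconn
  obtain ⟨C, hC, hle⟩ := exists_forall_kobayashi_sdiff_le_add hG hGconn hGbdd hK hKG hlines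
  have hcompare : ∀ z ∈ G \ K, ∀ w ∈ G \ K, kobayashi G z w ≤ kobayashi (G \ K) z w ∧
      kobayashi (G \ K) z w ≤ kobayashi G z w + C := fun z hz w hw =>
    ⟨hdisc.kobayashi_le_of_subset sdiff_subset hz hw, hle z hz w hw⟩
  exact ⟨hconn, ⟨C, hC, hcompare⟩, fun h => h.of_le_of_le_add sdiff_subset hcompare⟩

/-- **Proposition 7.** Let `G` be a bounded domain in `ℂⁿ` (`n ≥ 2`) and `K ⊆ G` a
compact set such that through every point of `ℂⁿ ∖ K` passes a complex affine line
disjoint from `K`. Then `G ∖ K` is a domain, `k_{G∖K}` is quasi-isometrically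
equivalent to the restriction of `k_G`, and if `(G, k_G)` is Gromov hyperbolic then so
is `(G∖K, k_{G∖K})`. -/
theorem kobayashi_quasi_isometric_on_complement_of_compact
    (n : ℕ) (hn : 2 ≤ n) (G : Set (EuclideanSpace ℂ (Fin n)))
    (hGopen : IsOpen G) (hGconn : IsConnected G) (hGbdd : Bornology.IsBounded G)
    (K : Set (EuclideanSpace ℂ (Fin n))) (hK : IsCompact K) (hKG : K ⊆ G)
    (hlines : ∀ z : EuclideanSpace ℂ (Fin n), z ∉ K →
      ∃ b : EuclideanSpace ℂ (Fin n), b ≠ 0 ∧ ∀ t : ℂ, z + t • b ∉ K) :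
    IsConnected (G \ K) ∧
    (∃ c₁ : ℝ, 1 ≤ c₁ ∧ ∃ c₂ : ℝ, 0 ≤ c₂ ∧
      ∀ z ∈ G \ K, ∀ w ∈ G \ K,
        kobayashi G z w ≤ kobayashi (G \ K) z w ∧
        kobayashi (G \ K) z w ≤ c₁ * kobayashi G z w + c₂) ∧
    (GromovHyperbolicWith G (kobayashi G) →
      GromovHyperbolicWith (G \ K) (kobayashi (G \ K))) := by
  have : Nonempty (Fin n) := ⟨⟨0, by omega⟩⟩
  obtain ⟨hconn, ⟨C, hC, hle⟩, hgromov⟩ :=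
    kobayashi_quasi_isometric_on_complement_of_compact_general hGopen hGconn hGbdd hK hKG hlines
  exact ⟨hconn, ⟨1, le_rfl, C, hC, by simpa only [one_mul] using hle⟩, hgromov⟩
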